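/- Let d ≥ R ≥ 1, λ : Fin R → ℝ, and let A, B, C ∈ ℝ^{d×R} all have orthonormal columns. Define T(a,b,c) = Σ_{j=1}^{R} λ_j A_{a j} B_{b j} C_{c j}. Let Φ : Fin d × Fin d × Fin d → ℝ and φ ≥ 0 satisfy |Σ_{k,z,u} Φ(k,z,u) x_k y_z w_u| ≤ φ‖x‖‖y‖‖w‖ for all x, y, w ∈ ℝ^d, and let T̂ = T + Φ. For a tensor S, let S_u denote the d×d slice (S_u)_{a b} = S(a,b,u). Define M = Σ_{u=1}^{d} T_u T_uᵀ and M̂ = Σ_{u=1}^{d} T̂_u T̂_uᵀ. Then for all x, y ∈ ℝ^d, |xᵀ (M̂ − M) y| ≤ (2‖λ‖φ + d·φ²) · ‖x‖ · ‖y‖, where ‖λ‖ = √(Σ_{j=1}^{R} λ_j²). -/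

import Mathlib

open Matrix BigOperators

/-- Euclidean norm of a finite real vector. -/
noncomputable def eunorm {n : ℕ} (x : Fin n → ℝ) : ℝ := Real.sqrt (∑ i, x i ^ 2)

lemma eunorm_nonneg {n : ℕ} (x : Fin n → ℝ) : 0 ≤ eunorm x := Real.sqrt_nonneg _

lemma eunorm_sq {n : ℕ} (x : Fin n → ℝ) : eunorm x ^ 2 = ∑ i, x i ^ 2 :=
  Real.sq_sqrt (Finset.sum_nonneg fun _ _ => sq_nonneg _)

/-- Contraction of the first mode of a tensor with a vector. -/
def contractFirst {d : ℕ} (S : Fin d → Fin d → Fin d → ℝ) (x : Fin d → ℝ) (b u : Fin d) : ℝ :=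
  ∑ i, x i * S i b u

lemma eunorm_single {d : ℕ} (u : Fin d) : eunorm (Pi.single u 1 : Fin d → ℝ) = 1 := by
  simp [eunorm, Pi.single_apply]

lemma eunorm_column {d R : ℕ} {A : Matrix (Fin d) (Fin R) ℝ} (hA : Aᵀ * A = 1) (j : Fin R) :
    eunorm (fun a => A a j) = 1 := by
  have h := congrFun (congrFun hA j) j
  simp only [Matrix.mul_apply, Matrix.transpose_apply, Matrix.one_apply_eq] at h
  simp [eunorm, pow_two, h]

/-- Bessel's inequality for a matrix with orthonormal columns. -/
lemma eunorm_transpose_mulVec_le {d R : ℕ} {A : Matrix (Fin d) (Fin R) ℝ} (hA : Aᵀ * A = 1)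
    (x : Fin d → ℝ) : eunorm (Aᵀ *ᵥ x) ≤ eunorm x := by
  refine Real.sqrt_le_sqrt ?_
  set c := Aᵀ *ᵥ x with hc
  have hxc : x ⬝ᵥ (A *ᵥ c) = c ⬝ᵥ c := by
    rw [Matrix.dotProduct_mulVec, ← Matrix.mulVec_transpose]
  have hcc : (A *ᵥ c) ⬝ᵥ (A *ᵥ c) = c ⬝ᵥ c := by
    rw [Matrix.dotProduct_mulVec, ← Matrix.mulVec_transpose, Matrix.mulVec_mulVec, hA,
      Matrix.one_mulVec]
  have hpos : 0 ≤ (x - A *ᵥ c) ⬝ᵥ (x - A *ᵥ c) :=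
    Finset.sum_nonneg fun i _ => mul_self_nonneg _
  rw [sub_dotProduct, dotProduct_sub, dotProduct_sub, hcc, dotProduct_comm (A *ᵥ c) x, hxc] at hpos
  simp only [pow_two]
  change c ⬝ᵥ c ≤ x ⬝ᵥ x
  linarith

lemma sum_abs_mul_abs_le_eunorm {n : ℕ} (f g : Fin n → ℝ) :
    ∑ i, |f i| * |g i| ≤ eunorm f * eunorm g := by
  simpa [eunorm] using Real.sum_mul_le_sqrt_mul_sqrt Finset.univ (fun i => |f i|) (fun i => |g i|)

section Perturbation

variable {d : ℕ} {Φ : Fin d → Fin d → Fin d → ℝ} {φ : ℝ}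

lemma sum_contractFirst_mul (x y w : Fin d → ℝ) :
    ∑ b, ∑ u, contractFirst Φ x b u * y b * w u =
      ∑ k, ∑ z, ∑ u, Φ k z u * x k * y z * w u := by
  simp only [contractFirst, Finset.sum_mul]
  calc _ = ∑ z, ∑ k, ∑ u, x k * Φ k z u * y z * w u :=
        Finset.sum_congr rfl fun z _ => Finset.sum_comm
    _ = ∑ k, ∑ z, ∑ u, x k * Φ k z u * y z * w u := Finset.sum_comm
    _ = _ := by
        refine Finset.sum_congr rfl fun k _ => Finset.sum_congr rfl fun z _ =>
          Finset.sum_congr rfl fun u _ => by ring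

/-- Each third-mode slice of `Φ` has operator norm at most `φ`. -/
lemma eunorm_contractFirst_le (hφ : 0 ≤ φ)
    (hop : ∀ x y w : Fin d → ℝ,
      |∑ k, ∑ z, ∑ u, Φ k z u * x k * y z * w u| ≤ φ * eunorm x * eunorm y * eunorm w)
    (x : Fin d → ℝ) (u : Fin d) :
    eunorm (fun b => contractFirst Φ x b u) ≤ φ * eunorm x := by
  set v : Fin d → ℝ := fun b => contractFirst Φ x b u with hv
  have h := hop x v (Pi.single u 1)
  rw [← sum_contractFirst_mul, eunorm_single, mul_one] at h
  have hsq : ∑ b, ∑ u', contractFirst Φ x b u' * v b * (Pi.single u 1 : Fin d → ℝ) u' =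
      eunorm v ^ 2 := by
    rw [eunorm_sq]
    simp [Pi.single_apply, hv, pow_two]
  rw [hsq, abs_of_nonneg (sq_nonneg _)] at h
  have hx := mul_nonneg hφ (eunorm_nonneg x)
  by_contra! hlt
  nlinarith

lemma abs_sum_contractFirst_mul_contractFirst_le (hφ : 0 ≤ φ)
    (hop : ∀ x y w : Fin d → ℝ,
      |∑ k, ∑ z, ∑ u, Φ k z u * x k * y z * w u| ≤ φ * eunorm x * eunorm y * eunorm w)
    (x y : Fin d → ℝ) :
    |∑ u, ∑ b, contractFirst Φ x b u * contractFirst Φ y b u| ≤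
      d * φ ^ 2 * eunorm x * eunorm y := by
  have hslice (u : Fin d) : |∑ b, contractFirst Φ x b u * contractFirst Φ y b u| ≤
      (φ * eunorm x) * (φ * eunorm y) := by
    calc _ ≤ ∑ b, |contractFirst Φ x b u| * |contractFirst Φ y b u| := by
          simpa only [abs_mul] using Finset.abs_sum_le_sum_abs
            (fun b => contractFirst Φ x b u * contractFirst Φ y b u) Finset.univ
      _ ≤ _ := sum_abs_mul_abs_le_eunorm _ _
      _ ≤ _ := mul_le_mul (eunorm_contractFirst_le hφ hop x u) (eunorm_contractFirst_le hφ hop y u)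
          (eunorm_nonneg _) (mul_nonneg hφ (eunorm_nonneg x))
  calc _ ≤ ∑ u, |∑ b, contractFirst Φ x b u * contractFirst Φ y b u| :=
        Finset.abs_sum_le_sum_abs _ _
    _ ≤ ∑ _u : Fin d, (φ * eunorm x) * (φ * eunorm y) := Finset.sum_le_sum fun u _ => hslice u
    _ = _ := by simp; ring

lemma abs_sum_cp_contractFirst_mul_le {R : ℕ} {lam : Fin R → ℝ}
    {A B C : Matrix (Fin d) (Fin R) ℝ} (hA : Aᵀ * A = 1) (hB : Bᵀ * B = 1) (hC : Cᵀ * C = 1)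
    {T : Fin d → Fin d → Fin d → ℝ}
    (hT : ∀ a b c, T a b c = ∑ j, lam j * A a j * B b j * C c j) (hφ : 0 ≤ φ)
    (hop : ∀ x y w : Fin d → ℝ,
      |∑ k, ∑ z, ∑ u, Φ k z u * x k * y z * w u| ≤ φ * eunorm x * eunorm y * eunorm w)
    (x y : Fin d → ℝ) :
    |∑ u, ∑ b, contractFirst T x b u * contractFirst Φ y b u| ≤
      eunorm lam * φ * eunorm x * eunorm y := by
  have hcontract (b u : Fin d) :
      contractFirst T x b u = ∑ j, lam j * (Aᵀ *ᵥ x) j * B b j * C u j := by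
    simp only [contractFirst, hT, Matrix.mulVec, dotProduct, Matrix.transpose_apply,
      Finset.mul_sum, Finset.sum_mul]
    rw [Finset.sum_comm]
    exact Finset.sum_congr rfl fun j _ => Finset.sum_congr rfl fun i _ => by ring
  have hexpand : ∑ u, ∑ b, contractFirst T x b u * contractFirst Φ y b u =
      ∑ j, lam j * (Aᵀ *ᵥ x) j * ∑ b, ∑ u, contractFirst Φ y b u * B b j * C u j := by
    simp only [hcontract, Finset.mul_sum, Finset.sum_mul]
    rw [Finset.sum_comm]
    calc _ = ∑ b, ∑ j, ∑ u, lam j * (Aᵀ *ᵥ x) j * B b j * C u j * contractFirst Φ y b u :=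
          Finset.sum_congr rfl fun b _ => Finset.sum_comm
      _ = ∑ j, ∑ b, ∑ u, lam j * (Aᵀ *ᵥ x) j * B b j * C u j * contractFirst Φ y b u :=
          Finset.sum_comm
      _ = _ := by
          refine Finset.sum_congr rfl fun j _ => Finset.sum_congr rfl fun b _ =>
            Finset.sum_congr rfl fun u _ => by ring
  have hform (j : Fin R) :
      |∑ b, ∑ u, contractFirst Φ y b u * B b j * C u j| ≤ φ * eunorm y := by
    have h := hop y (fun b => B b j) (fun u => C u j)
    rwa [← sum_contractFirst_mul, eunorm_column hB, eunorm_column hC, mul_one, mul_one] at h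
  have hy := mul_nonneg hφ (eunorm_nonneg y)
  rw [hexpand]
  calc _ ≤ ∑ j, |lam j| * |(Aᵀ *ᵥ x) j| * (φ * eunorm y) := by
        refine (Finset.abs_sum_le_sum_abs _ _).trans (Finset.sum_le_sum fun j _ => ?_)
        rw [abs_mul, abs_mul]
        exact mul_le_mul_of_nonneg_left (hform j) (by positivity)
    _ = (∑ j, |lam j| * |(Aᵀ *ᵥ x) j|) * (φ * eunorm y) := by rw [Finset.sum_mul]
    _ ≤ (eunorm lam * eunorm x) * (φ * eunorm y) := by
        refine mul_le_mul_of_nonneg_right ((sum_abs_mul_abs_le_eunorm _ _).trans ?_) hy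
        exact mul_le_mul_of_nonneg_left (eunorm_transpose_mulVec_le hA x) (eunorm_nonneg _)
    _ = _ := by ring

end Perturbation

lemma sum_mul_sum_slices_mul {d : ℕ} (S S' : Fin d → Fin d → Fin d → ℝ) (x y : Fin d → ℝ) :
    ∑ i, ∑ j, x i * (∑ u, ∑ b, S i b u * S' j b u) * y j =
      ∑ u, ∑ b, contractFirst S x b u * contractFirst S' y b u := by
  simp only [contractFirst, Finset.mul_sum, Finset.sum_mul]
  calc _ = ∑ i, ∑ u, ∑ b, ∑ j, x i * (S i b u * S' j b u) * y j := by
        refine Finset.sum_congr rfl fun i _ => ?_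
        rw [Finset.sum_comm]
        exact Finset.sum_congr rfl fun u _ => Finset.sum_comm
    _ = ∑ u, ∑ b, ∑ i, ∑ j, x i * (S i b u * S' j b u) * y j := by
        rw [Finset.sum_comm]
        exact Finset.sum_congr rfl fun u _ => Finset.sum_comm
    _ = _ := by
        refine Finset.sum_congr rfl fun u _ => Finset.sum_congr rfl fun b _ => ?_
        rw [Finset.sum_comm]
        exact Finset.sum_congr rfl fun j _ => Finset.sum_congr rfl fun i _ => by ring

/-- Perturbation of the slice-based initialization matrix:
`‖M̂ − M‖_op ≤ 2‖λ‖φ + dφ²` as a bilinear-form bound. -/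
theorem slice_init_perturbation_bound
    {d R : ℕ} (hR : 1 ≤ R) (hRd : R ≤ d)
    (lam : Fin R → ℝ) (A B C : Matrix (Fin d) (Fin R) ℝ)
    (hA : Aᵀ * A = 1) (hB : Bᵀ * B = 1) (hC : Cᵀ * C = 1)
    (T Φ : Fin d → Fin d → Fin d → ℝ)
    (hT : ∀ a b c, T a b c = ∑ j, lam j * A a j * B b j * C c j)
    (φ : ℝ) (hφ : 0 ≤ φ)
    (hop : ∀ x y w : Fin d → ℝ,
      |∑ k, ∑ z, ∑ u, Φ k z u * x k * y z * w u| ≤ φ * eunorm x * eunorm y * eunorm w) :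
    ∀ x y : Fin d → ℝ,
      |∑ i, ∑ j, x i *
          ((∑ u, ∑ b, (T i b u + Φ i b u) * (T j b u + Φ j b u)) -
            (∑ u, ∑ b, T i b u * T j b u)) * y j|
        ≤ (2 * Real.sqrt (∑ m, lam m ^ 2) * φ + d * φ ^ 2) * eunorm x * eunorm y := by
  intro x y
  have hTΦ := abs_sum_cp_contractFirst_mul_le hA hB hC hT hφ hop x y
  have hΦT := abs_sum_cp_contractFirst_mul_le hA hB hC hT hφ hop y x
  have hΦΦ := abs_sum_contractFirst_mul_contractFirst_le hφ hop x y
  have hsplit : ∑ i, ∑ j, x i *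
          ((∑ u, ∑ b, (T i b u + Φ i b u) * (T j b u + Φ j b u)) -
            (∑ u, ∑ b, T i b u * T j b u)) * y j =
      (∑ u, ∑ b, contractFirst T x b u * contractFirst Φ y b u) +
      (∑ u, ∑ b, contractFirst T y b u * contractFirst Φ x b u) +
      ∑ u, ∑ b, contractFirst Φ x b u * contractFirst Φ y b u := by
    simp only [mul_comm (contractFirst T y _ _)]
    simp only [← sum_mul_sum_slices_mul, ← Finset.sum_add_distrib, ← add_mul, ← mul_add,
      ← Finset.sum_sub_distrib]
    refine Finset.sum_congr rfl fun i _ => Finset.sum_congr rfl fun j _ => ?_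
    congr 2
    refine Finset.sum_congr rfl fun u _ => Finset.sum_congr rfl fun b _ => by ring
  rw [hsplit]
  change _ ≤ (2 * eunorm lam * φ + d * φ ^ 2) * eunorm x * eunorm y
  refine (abs_add_three _ _ _).trans ?_
  linarith
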